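/- Let P ∈ ℝ^{n×n} be symmetric positive semidefinite, q ∈ ℝⁿ, H ∈ ℝ^{m×n}, g ∈ ℝᵐ, D ⊆ ℝⁿ nonempty closed convex, K ⊆ ℝᵐ a nonempty closed convex cone with polar cone K°, and α > 0. Let the sequence {w^j, z^j, v^j} be generated by the PIPG iteration: w^{j+1} = π_{K°}[v^j + α(H z^j − g)], z^{j+1} = π_D[z^j − α(P z^j + q + Hᵀ w^{j+1})], v^{j+1} = w^{j+1} + α H(z^{j+1} − z^j). Let ν ≥ ‖H‖. Then for all j ≥ 3, d(H z^j − g | N_{K°}(w^j)) ≤ (1/α)‖w^j − w^{j−1}‖ + ν‖z^j − 2z^{j−1} + z^{j−2}‖. -/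

import Mathlib

open scoped RealInnerProductSpace
open Filter Topology Metric ContinuousLinearMap

/-- Projection onto a set: the unique nearest point, when it exists
(it exists and is unique for nonempty closed convex sets in Euclidean space). -/
noncomputable def proj {E : Type*} [NormedAddCommGroup E] [InnerProductSpace ℝ E]
    (S : Set E) (x : E) : E :=
  open Classical in
  if h : ∃ y, y ∈ S ∧ ∀ z ∈ S, ‖x - y‖ ≤ ‖x - z‖ then h.choose else 0

/-- The polar cone `K° = {w | ⟪w, y⟫ ≤ 0 for all y ∈ K}`. -/
def polarCone {E : Type*} [NormedAddCommGroup E] [InnerProductSpace ℝ E]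
    (K : Set E) : Set E := {w | ∀ y ∈ K, ⟪w, y⟫ ≤ 0}

/-- The recession cone `rec D = {y | y + z ∈ D for all z ∈ D}`. -/
def recCone {E : Type*} [NormedAddCommGroup E] (D : Set E) : Set E :=
  {y | ∀ z ∈ D, y + z ∈ D}

/-- The normal cone of `D` at `z`: `N_D(z) = {y | ⟪y, z' - z⟫ ≤ 0 for all z' ∈ D}`. -/
def normalCone {E : Type*} [NormedAddCommGroup E] [InnerProductSpace ℝ E]
    (D : Set E) (z : E) : Set E := {y | ∀ z' ∈ D, ⟪y, z' - z⟫ ≤ 0}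

/-!
The optimality condition of the projection `w = proj C (w' + α • y)` places `y - α⁻¹ • (w - w')` in
the normal cone of `C` at `w`, so any `x` lies within `α⁻¹ * ‖w - w'‖ + ‖x - y‖` of that cone.
Substituting the update of `v` into the update of `w` exhibits the dual step as such a projection,
with `y` the value of `H · - g` at the extrapolated point `2 • z (j - 1) - z (j - 2)`. For
`x = H (z j) - g`, the difference `x - y` is then `H` applied to the second difference of `z`.
-/

theorem norm_sub_eq_iInf_iff {E : Type*} [SeminormedAddCommGroup E] {C : Set E} {x p : E}
    (hp : p ∈ C) :
    (‖x - p‖ = ⨅ y : C, ‖x - y‖) ↔ ∀ y ∈ C, ‖x - p‖ ≤ ‖x - y‖ := by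
  have : Nonempty C := ⟨⟨p, hp⟩⟩
  have hbdd : BddBelow (Set.range fun y : C => ‖x - y‖) :=
    ⟨0, Set.forall_mem_range.2 fun _ => norm_nonneg _⟩
  exact ⟨fun h y hy => h.trans_le (ciInf_le hbdd ⟨y, hy⟩),
    fun h => le_antisymm (le_ciInf fun y => h y y.2) (ciInf_le hbdd ⟨p, hp⟩)⟩

section NormalCone

variable {F : Type*} [NormedAddCommGroup F] [InnerProductSpace ℝ F] {C : Set F}

theorem smul_mem_normalCone {a : ℝ} (ha : 0 ≤ a) {x y : F} (hy : y ∈ normalCone C x) :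
    a • y ∈ normalCone C x := by
  intro x' hx'
  rw [real_inner_smul_left]
  exact mul_nonpos_of_nonneg_of_nonpos ha (hy x' hx')

theorem proj_mem_and_norm_sub_proj_le (hne : C.Nonempty) (hC : IsComplete C)
    (hconv : Convex ℝ C) (x : F) :
    _root_.proj C x ∈ C ∧ ∀ y ∈ C, ‖x - _root_.proj C x‖ ≤ ‖x - y‖ := by
  have hex : ∃ p, p ∈ C ∧ ∀ y ∈ C, ‖x - p‖ ≤ ‖x - y‖ := by
    obtain ⟨p, hp, hmin⟩ := exists_norm_eq_iInf_of_complete_convex hne hC hconv x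
    exact ⟨p, hp, (norm_sub_eq_iInf_iff hp).1 hmin⟩
  rw [_root_.proj, dif_pos hex]
  exact hex.choose_spec

theorem sub_proj_mem_normalCone (hne : C.Nonempty) (hC : IsComplete C) (hconv : Convex ℝ C)
    (x : F) : x - _root_.proj C x ∈ normalCone C (_root_.proj C x) := by
  obtain ⟨hmem, hle⟩ := proj_mem_and_norm_sub_proj_le hne hC hconv x
  exact (norm_eq_iInf_iff_real_inner_le_zero hconv hmem).1 ((norm_sub_eq_iInf_iff hmem).2 hle)

theorem sub_inv_smul_proj_sub_mem_normalCone (hne : C.Nonempty) (hC : IsComplete C)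
    (hconv : Convex ℝ C) {α : ℝ} (hα : 0 < α) (w y : F) :
    y - α⁻¹ • (_root_.proj C (w + α • y) - w) ∈ normalCone C (_root_.proj C (w + α • y)) := by
  convert smul_mem_normalCone (inv_nonneg.2 hα.le)
    (sub_proj_mem_normalCone hne hC hconv (w + α • y)) using 1
  rw [add_sub_right_comm, smul_add, inv_smul_smul₀ hα.ne', ← neg_sub w, smul_neg, sub_neg_eq_add,
    add_comm]

theorem infDist_normalCone_proj_le (hne : C.Nonempty) (hC : IsComplete C) (hconv : Convex ℝ C)
    {α : ℝ} (hα : 0 < α) (w x y : F) :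
    infDist x (normalCone C (_root_.proj C (w + α • y))) ≤
      α⁻¹ * ‖_root_.proj C (w + α • y) - w‖ + ‖x - y‖ := by
  set p := _root_.proj C (w + α • y)
  calc infDist x (normalCone C p)
      ≤ dist x (y - α⁻¹ • (p - w)) :=
        infDist_le_dist_of_mem (sub_inv_smul_proj_sub_mem_normalCone hne hC hconv hα w y)
    _ = ‖α⁻¹ • (p - w) + (x - y)‖ := by rw [dist_eq_norm]; congr 1; abel
    _ ≤ ‖α⁻¹ • (p - w)‖ + ‖x - y‖ := norm_add_le _ _
    _ = α⁻¹ * ‖p - w‖ + ‖x - y‖ := by rw [norm_smul_of_nonneg (inv_nonneg.2 hα.le)]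

end NormalCone

section PolarCone

variable {F : Type*} [NormedAddCommGroup F] [InnerProductSpace ℝ F]

theorem polarCone_eq_dual (K : Set F) : polarCone K = PointedCone.dual (-innerₗ F) K := by
  ext w
  simp [polarCone, real_inner_comm]

theorem polarCone_nonempty (K : Set F) : (polarCone K).Nonempty :=
  polarCone_eq_dual K ▸ Submodule.nonempty _

theorem isClosed_polarCone (K : Set F) : IsClosed (polarCone K) :=
  polarCone_eq_dual K ▸ PointedCone.isClosed_dual fun x => (innerSL ℝ x).continuous.neg

theorem convex_polarCone (K : Set F) : Convex ℝ (polarCone K) :=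
  polarCone_eq_dual K ▸ PointedCone.convex _

end PolarCone

theorem stmt3_general {E F : Type*} [SeminormedAddCommGroup E] [NormedSpace ℝ E]
    [NormedAddCommGroup F] [InnerProductSpace ℝ F]
    {C : Set F} (hne : C.Nonempty) (hC : IsComplete C) (hconv : Convex ℝ C)
    {α : ℝ} (hα : 0 < α) (H : E →L[ℝ] F) (g : F) {w v : ℕ → F} {z : ℕ → E}
    (hw : ∀ j, w (j + 1) = _root_.proj C (v j + α • (H (z j) - g)))
    (hv : ∀ j, v (j + 1) = w (j + 1) + α • H (z (j + 1) - z j))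
    {ν : ℝ} (hν : ‖H‖ ≤ ν) {j : ℕ} (hj : 2 ≤ j) :
    infDist (H (z j) - g) (normalCone C (w j)) ≤
      (1 / α) * ‖w j - w (j - 1)‖ + ν * ‖z j - (2 : ℝ) • z (j - 1) + z (j - 2)‖ := by
  obtain ⟨k, rfl⟩ := Nat.exists_eq_add_of_le' hj
  change infDist (H (z (k + 2)) - g) (normalCone C (w (k + 2))) ≤
    (1 / α) * ‖w (k + 2) - w (k + 1)‖ + ν * ‖z (k + 2) - (2 : ℝ) • z (k + 1) + z k‖
  set y := H ((2 : ℝ) • z (k + 1) - z k) - g with hy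
  have hstep : w (k + 2) = _root_.proj C (w (k + 1) + α • y) := by
    rw [hw, hv, add_assoc, ← smul_add, hy, two_smul]
    simp only [map_add, map_sub]
    congr 3
    abel
  have hdiff : H (z (k + 2)) - g - y = H (z (k + 2) - (2 : ℝ) • z (k + 1) + z k) := by
    simp only [hy, map_add, map_sub]
    abel
  calc infDist (H (z (k + 2)) - g) (normalCone C (w (k + 2)))
      ≤ α⁻¹ * ‖w (k + 2) - w (k + 1)‖ + ‖H (z (k + 2)) - g - y‖ :=
        hstep ▸ infDist_normalCone_proj_le hne hC hconv hα _ _ _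
    _ ≤ (1 / α) * ‖w (k + 2) - w (k + 1)‖ + ν * ‖z (k + 2) - (2 : ℝ) • z (k + 1) + z k‖ := by
        rw [one_div, hdiff]
        gcongr
        exact H.le_of_opNorm_le hν _

/-- distance bound for the dual optimality residual of PIPG. -/
theorem stmt3 {n m : ℕ} (α : ℝ) (hα0 : 0 < α)
    (P : EuclideanSpace ℝ (Fin n) →L[ℝ] EuclideanSpace ℝ (Fin n))
    (hPsa : IsSelfAdjoint P) (hPpsd : ∀ x, 0 ≤ ⟪P x, x⟫)
    (q : EuclideanSpace ℝ (Fin n))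
    (H : EuclideanSpace ℝ (Fin n) →L[ℝ] EuclideanSpace ℝ (Fin m))
    (g : EuclideanSpace ℝ (Fin m))
    (D : Set (EuclideanSpace ℝ (Fin n)))
    (hDne : D.Nonempty) (hDcl : IsClosed D) (hDconv : Convex ℝ D)
    (K : Set (EuclideanSpace ℝ (Fin m)))
    (hKne : K.Nonempty) (hKcl : IsClosed K) (hKconv : Convex ℝ K)
    (hKcone : ∀ w ∈ K, ∀ a : ℝ, 0 ≤ a → a • w ∈ K)
    (w v : ℕ → EuclideanSpace ℝ (Fin m))
    (z : ℕ → EuclideanSpace ℝ (Fin n))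
    (hw : ∀ j : ℕ, w (j + 1) = proj (polarCone K) (v j + α • (H (z j) - g)))
    (hz : ∀ j : ℕ, z (j + 1) =
      proj D (z j - α • (P (z j) + q + (ContinuousLinearMap.adjoint H) (w (j + 1)))))
    (hv : ∀ j : ℕ, v (j + 1) = w (j + 1) + α • H (z (j + 1) - z j))
    (ν : ℝ) (hν : ‖H‖ ≤ ν) :
    ∀ j : ℕ, 3 ≤ j →
      Metric.infDist (H (z j) - g) (normalCone (polarCone K) (w j))
        ≤ (1/α) * ‖w j - w (j - 1)‖ + ν * ‖z j - (2 : ℝ) • z (j - 1) + z (j - 2)‖ :=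
  fun _ hj => stmt3_general (polarCone_nonempty K) (isClosed_polarCone K).isComplete
    (convex_polarCone K) hα0 H g hw hv hν (le_of_lt hj)
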